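/- arXiv:2303.00418 — 4 statements merged into one kernel-verified Lean document; each statement's English description precedes it below -/
import Mathlib

section
/- Let L be a finite-dimensional Leibniz algebra, B a weak c-ideal of L, and K a subalgebra with B ⊆ K ⊆ L. Then B is a weak c-ideal of K. -/
/-!
If `C = C_0 ⊴ C_1 ⊴ ⋯ ⊴ C_n = L` witnesses that `B` is a weak c-ideal of `L`, then `C ∩ K` is a
witness in `K`. Intersecting the chain with the subalgebra `K` keeps each term an ideal of the next
(`IsSubidealOf.inf_subalg`), the modular law gives `B + (C ∩ K) = (B + C) ∩ K = K`, and
`B ∩ C ∩ K ⊆ B_L ⊆ B_K` because `B_L`, an ideal of `L` contained in `B ⊆ K`, is an ideal of `K`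
(`leibCore_le_leibCoreIn`).
-/

open Submodule

variable {F : Type*} [Field F] {L : Type*} [AddCommGroup L] [Module F L]

/-- `br` is a (right) Leibniz bracket: the right multiplications are derivations. -/
def IsLeibnizBracket (br : L →ₗ[F] L →ₗ[F] L) : Prop :=
  ∀ x y z : L, br x (br y z) = br (br x y) z - br (br x z) y

/-- A symmetric Leibniz bracket: right and left Leibniz, and `[[x,y],[x,y]] = 0`. -/
def IsSymmetricLeibnizBracket (br : L →ₗ[F] L →ₗ[F] L) : Prop :=
  IsLeibnizBracket br ∧
  (∀ x y z : L, br x (br y z) = br (br x y) z + br y (br x z)) ∧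
  (∀ x y : L, br (br x y) (br x y) = 0)

/-- `B` is a subalgebra (a submodule closed under the bracket). -/
def IsSubalg (br : L →ₗ[F] L →ₗ[F] L) (B : Submodule F L) : Prop :=
  ∀ x ∈ B, ∀ y ∈ B, br x y ∈ B

/-- `A` is an ideal of the subalgebra `B`. -/
def IsIdealOf (br : L →ₗ[F] L →ₗ[F] L) (A B : Submodule F L) : Prop :=
  A ≤ B ∧ ∀ x ∈ A, ∀ y ∈ B, br x y ∈ A ∧ br y x ∈ A

/-- `A` is an ideal of `L`. -/
def IsLeibIdeal (br : L →ₗ[F] L →ₗ[F] L) (A : Submodule F L) : Prop :=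
  IsIdealOf br A ⊤

/-- `C` is a subideal of the subalgebra `K`: there is a chain
`C = C_0 ⊆ C_1 ⊆ ... ⊆ C_n = K` with each term an ideal of the next. -/
def IsSubidealOf (br : L →ₗ[F] L →ₗ[F] L) (C K : Submodule F L) : Prop :=
  ∃ (n : ℕ) (ch : ℕ → Submodule F L), ch 0 = C ∧ ch n = K ∧
    ∀ i < n, IsIdealOf br (ch i) (ch (i + 1))

/-- `C` is a subideal of `L`. -/
def IsSubideal (br : L →ₗ[F] L →ₗ[F] L) (C : Submodule F L) : Prop :=
  IsSubidealOf br C ⊤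

/-- The core of `B` in the subalgebra `K`: the largest ideal of `K` contained in `B`. -/
def leibCoreIn (br : L →ₗ[F] L →ₗ[F] L) (K B : Submodule F L) : Submodule F L :=
  sSup {A | IsIdealOf br A K ∧ A ≤ B}

/-- `B_L`, the largest ideal of `L` contained in `B`. -/
def leibCore (br : L →ₗ[F] L →ₗ[F] L) (B : Submodule F L) : Submodule F L :=
  leibCoreIn br ⊤ B

/-- `B` is a c-ideal of `L`. -/
def IsCIdeal (br : L →ₗ[F] L →ₗ[F] L) (B : Submodule F L) : Prop :=
  IsSubalg br B ∧ ∃ K, IsLeibIdeal br K ∧ B ⊔ K = ⊤ ∧ B ⊓ K ≤ leibCore br B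

/-- `B` is a weak c-ideal of the subalgebra `K`. -/
def IsWeakCIdealOf (br : L →ₗ[F] L →ₗ[F] L) (B K : Submodule F L) : Prop :=
  IsSubalg br B ∧ B ≤ K ∧
    ∃ C, IsSubidealOf br C K ∧ B ⊔ C = K ∧ B ⊓ C ≤ leibCoreIn br K B

/-- `B` is a weak c-ideal of `L`. -/
def IsWeakCIdeal (br : L →ₗ[F] L →ₗ[F] L) (B : Submodule F L) : Prop :=
  IsWeakCIdealOf br B ⊤

/-- The Leibniz kernel `I`, spanned by all squares. -/
def leibnizKernel (br : L →ₗ[F] L →ₗ[F] L) : Submodule F L :=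
  Submodule.span F {y | ∃ x : L, y = br x x}

/-- The span of all brackets `[a,b]` with `a ∈ A`, `b ∈ B`. -/
def brSpan (br : L →ₗ[F] L →ₗ[F] L) (A B : Submodule F L) : Submodule F L :=
  Submodule.span F {z | ∃ x ∈ A, ∃ y ∈ B, z = br x y}

/-- The derived series of the subalgebra `U`. -/
def derSeriesOf (br : L →ₗ[F] L →ₗ[F] L) (U : Submodule F L) : ℕ → Submodule F L
  | 0 => U
  | n + 1 => brSpan br (derSeriesOf br U n) (derSeriesOf br U n)

/-- The subalgebra `U` is solvable. -/
def IsSolvableSub (br : L →ₗ[F] L →ₗ[F] L) (U : Submodule F L) : Prop :=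
  ∃ n, derSeriesOf br U n = ⊥

/-- The lower central series of the subalgebra `U`. -/
def lcsOf (br : L →ₗ[F] L →ₗ[F] L) (U : Submodule F L) : ℕ → Submodule F L
  | 0 => U
  | n + 1 => brSpan br (lcsOf br U n) U

/-- The subalgebra `U` is nilpotent. -/
def IsNilpotentSub (br : L →ₗ[F] L →ₗ[F] L) (U : Submodule F L) : Prop :=
  ∃ n, lcsOf br U n = ⊥

/-- `M` is a maximal (proper) subalgebra of the subalgebra `U`. -/
def IsMaximalSubalgOf (br : L →ₗ[F] L →ₗ[F] L) (M U : Submodule F L) : Prop :=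
  IsSubalg br M ∧ M < U ∧ ∀ K, IsSubalg br K → M ≤ K → K ≤ U → K = M ∨ K = U

/-- `M` is a maximal subalgebra of `L`. -/
def IsMaximalSubalg (br : L →ₗ[F] L →ₗ[F] L) (M : Submodule F L) : Prop :=
  IsMaximalSubalgOf br M ⊤

/-- `U` is a maximal nilpotent subalgebra of `L`. -/
def IsMaximalNilpotentSub (br : L →ₗ[F] L →ₗ[F] L) (U : Submodule F L) : Prop :=
  IsSubalg br U ∧ IsNilpotentSub br U ∧
    ∀ V, IsSubalg br V → IsNilpotentSub br V → U ≤ V → V = U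

/-- `H` is a Cartan subalgebra of the subalgebra `S`: a nilpotent subalgebra
that is self-normalizing in `S`. -/
def IsCartanSubalgOf (br : L →ₗ[F] L →ₗ[F] L) (H S : Submodule F L) : Prop :=
  IsSubalg br H ∧ H ≤ S ∧ IsNilpotentSub br H ∧
    ∀ x ∈ S, (∀ c ∈ H, br x c ∈ H ∧ br c x ∈ H) → x ∈ H

/-- `H` is a Cartan subalgebra of `L`. -/
def IsCartanSubalg (br : L →ₗ[F] L →ₗ[F] L) (H : Submodule F L) : Prop :=
  IsCartanSubalgOf br H ⊤

/-- The Frattini subalgebra of the subalgebra `C`: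
the intersection of the maximal subalgebras of `C`. -/
def frattiniIn (br : L →ₗ[F] L →ₗ[F] L) (C : Submodule F L) : Submodule F L :=
  sInf {M | IsMaximalSubalgOf br M C}

/-- The Frattini subalgebra `F(L)`. -/
def frattiniSubalg (br : L →ₗ[F] L →ₗ[F] L) : Submodule F L :=
  frattiniIn br ⊤

/-- The Frattini ideal `φ(L)`. -/
def frattiniIdeal (br : L →ₗ[F] L →ₗ[F] L) : Submodule F L :=
  leibCore br (frattiniSubalg br)

/-- `L` is supersolvable: there is a chain of ideals of `L` from `0` to `L`
each of codimension one in the next. -/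
def IsSupersolvable (br : L →ₗ[F] L →ₗ[F] L) : Prop :=
  ∃ (n : ℕ) (ch : ℕ → Submodule F L), ch 0 = ⊥ ∧ ch n = ⊤ ∧
    (∀ i ≤ n, IsLeibIdeal br (ch i)) ∧
    ∀ i < n, ch i ≤ ch (i + 1) ∧
      Module.finrank F (ch (i + 1)) = Module.finrank F (ch i) + 1

/-- A subalgebra is abelian if all brackets of its elements vanish. -/
def IsAbelianSub (br : L →ₗ[F] L →ₗ[F] L) (A : Submodule F L) : Prop :=
  ∀ x ∈ A, ∀ y ∈ A, br x y = 0

/-- `A` is a minimal abelian ideal of `L`. -/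
def IsMinimalAbelianIdeal (br : L →ₗ[F] L →ₗ[F] L) (A : Submodule F L) : Prop :=
  IsLeibIdeal br A ∧ A ≠ ⊥ ∧ IsAbelianSub br A ∧
    ∀ A', IsLeibIdeal br A' → A' ≤ A → A' = ⊥ ∨ A' = A

/-- The abelian socle `Asoc(L)`: the sum of the minimal abelian ideals of `L`. -/
def abelianSocle (br : L →ₗ[F] L →ₗ[F] L) : Submodule F L :=
  sSup {A | IsMinimalAbelianIdeal br A}

theorem isLeibIdeal_sSup (br : L →ₗ[F] L →ₗ[F] L) (S : Set (Submodule F L))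
    (h : ∀ A ∈ S, IsLeibIdeal br A) : IsLeibIdeal br (sSup S) := by
  refine ⟨le_top, fun x hx y _ => ?_⟩
  let P : Submodule F L :=
    { carrier := {a | br a y ∈ sSup S ∧ br y a ∈ sSup S}
      zero_mem' := by simp
      add_mem' := by
        rintro a b ⟨ha1, ha2⟩ ⟨hb1, hb2⟩
        constructor
        · simpa [map_add, LinearMap.add_apply] using add_mem ha1 hb1
        · simpa [map_add] using add_mem ha2 hb2
      smul_mem' := by
        rintro c a ⟨ha1, ha2⟩
        constructor
        · simpa [map_smul, LinearMap.smul_apply] using smul_mem _ c ha1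
        · simpa [map_smul] using smul_mem _ c ha2 }
  have hP : sSup S ≤ P := by
    refine sSup_le fun A hA a ha => ?_
    exact ⟨le_sSup hA ((h A hA).2 a ha y trivial).1,
           le_sSup hA ((h A hA).2 a ha y trivial).2⟩
  exact hP hx

theorem leibCore_isIdeal (br : L →ₗ[F] L →ₗ[F] L) (B : Submodule F L) :
    IsLeibIdeal br (leibCore br B) :=
  isLeibIdeal_sSup br _ fun _ hA => hA.1

/-- The bracket induced on the quotient of `L` by an ideal `A`. -/
def quotBr (br : L →ₗ[F] L →ₗ[F] L) (A : Submodule F L) (hA : IsLeibIdeal br A) :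
    (L ⧸ A) →ₗ[F] (L ⧸ A) →ₗ[F] (L ⧸ A) :=
  Submodule.liftQ A
    { toFun := fun x => Submodule.liftQ A (A.mkQ.comp (br x))
        (fun a ha => by
          simp only [LinearMap.mem_ker, LinearMap.comp_apply, Submodule.mkQ_apply,
            Submodule.Quotient.mk_eq_zero]
          exact (hA.2 a ha x trivial).2)
      map_add' := fun x y => by
        apply Submodule.linearMap_qext
        ext z
        simp [map_add]
      map_smul' := fun c x => by
        apply Submodule.linearMap_qext
        ext z
        simp [map_smul] }
    (fun a ha => by
      simp only [LinearMap.mem_ker]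
      apply Submodule.linearMap_qext
      ext z
      simp only [LinearMap.coe_mk, AddHom.coe_mk, LinearMap.comp_apply, Submodule.mkQ_apply,
        Submodule.liftQ_apply, LinearMap.zero_comp, LinearMap.zero_apply,
        Submodule.Quotient.mk_eq_zero]
      exact (hA.2 a ha z trivial).1)

theorem IsIdealOf.inf_subalg {br : L →ₗ[F] L →ₗ[F] L} {A D K : Submodule F L}
    (hK : IsSubalg br K) (h : IsIdealOf br A D) : IsIdealOf br (A ⊓ K) (D ⊓ K) :=
  ⟨inf_le_inf_right K h.1, fun x hx y hy =>
    ⟨⟨(h.2 x hx.1 y hy.1).1, hK x hx.2 y hy.2⟩, ⟨(h.2 x hx.1 y hy.1).2, hK y hy.2 x hx.2⟩⟩⟩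

theorem IsSubidealOf.inf_subalg {br : L →ₗ[F] L →ₗ[F] L} {C D K : Submodule F L}
    (hK : IsSubalg br K) (h : IsSubidealOf br C D) : IsSubidealOf br (C ⊓ K) (D ⊓ K) := by
  obtain ⟨n, ch, rfl, rfl, hch⟩ := h
  exact ⟨n, fun i => ch i ⊓ K, rfl, rfl, fun i hi => (hch i hi).inf_subalg hK⟩

theorem leibCore_le_leibCoreIn (br : L →ₗ[F] L →ₗ[F] L) {B K : Submodule F L} (hBK : B ≤ K) :
    leibCore br B ≤ leibCoreIn br K B := by
  have hB : leibCore br B ≤ B := sSup_le fun _ hA => hA.2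
  exact le_sSup ⟨⟨hB.trans hBK, fun x hx y _ => (leibCore_isIdeal br B).2 x hx y trivial⟩, hB⟩

/-- a weak c-ideal `B` of `L` is a weak c-ideal of any
intermediate subalgebra `K`. -/
theorem weakCIdeal_of_intermediate (br : L →ₗ[F] L →ₗ[F] L) (hbr : IsLeibnizBracket br)
    [FiniteDimensional F L] (B K : Submodule F L)
    (hK : IsSubalg br K) (hBK : B ≤ K)
    (h : IsWeakCIdeal br B) : IsWeakCIdealOf br B K := by
  obtain ⟨hB, -, C, hC, hsup, hinf⟩ := h
  refine ⟨hB, hBK, C ⊓ K, ?_, ?_, ?_⟩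
  · simpa using hC.inf_subalg hK
  · -- the modular law, applicable since `B ≤ K`
    rw [← sup_inf_assoc_of_le C hBK, hsup, top_inf_eq]
  · exact (inf_le_inf_left B inf_le_left).trans (hinf.trans (leibCore_le_leibCoreIn br hBK))
end

section
/- Let L be a finite-dimensional Leibniz algebra, A an ideal of L, and B a subalgebra with A ⊆ B. Then B is a weak c-ideal of L if and only if B/A is a weak c-ideal of L/A. -/
/-!
Let `π : L → L/A` be the projection. It is a surjective homomorphism of brackets, so images and
preimages under `π` of an ideal of a subspace are again ideals of the image or preimage of that
subspace. Applied termwise to a chain, this transports subideals in both directions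
(`IsSubideal.map_mkQ`, `IsSubideal.comap_mkQ`). Applied to the core, and combined with
`π⁻¹(π(B)) = B` (which holds because `A ≤ B`), it gives `π(B_L) ≤ π(B)_{L/A}` and
`π⁻¹(π(B)_{L/A}) ≤ B_L`.

If `C` complements `B` as in the definition of a weak c-ideal, then `π(C)` does so for `π(B)`,
since `π(B) ⊓ π(C) = π(B ⊓ C)` when `A ≤ B`. Conversely, if `D` does so for `π(B)`, then
`π⁻¹(D)` does so for `B`.
-/

open Submodule

variable {F : Type*} [Field F] {L : Type*} [AddCommGroup L] [Module F L]

theorem quotBr_mkQ (br : L →ₗ[F] L →ₗ[F] L) (A : Submodule F L) (hA : IsLeibIdeal br A)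
    (x y : L) : quotBr br A hA (A.mkQ x) (A.mkQ y) = A.mkQ (br x y) := rfl

theorem IsIdealOf.map_mkQ {br : L →ₗ[F] L →ₗ[F] L} {A : Submodule F L} (hA : IsLeibIdeal br A)
    {I K : Submodule F L} (h : IsIdealOf br I K) :
    IsIdealOf (quotBr br A hA) (I.map A.mkQ) (K.map A.mkQ) := by
  refine ⟨Submodule.map_mono h.1, ?_⟩
  rintro _ ⟨x, hx, rfl⟩ _ ⟨y, hy, rfl⟩
  exact ⟨⟨br x y, (h.2 x hx y hy).1, rfl⟩, ⟨br y x, (h.2 x hx y hy).2, rfl⟩⟩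

theorem IsIdealOf.comap_mkQ {br : L →ₗ[F] L →ₗ[F] L} {A : Submodule F L} (hA : IsLeibIdeal br A)
    {I K : Submodule F (L ⧸ A)} (h : IsIdealOf (quotBr br A hA) I K) :
    IsIdealOf br (I.comap A.mkQ) (K.comap A.mkQ) :=
  ⟨Submodule.comap_mono h.1, fun x hx y hy => h.2 (A.mkQ x) hx (A.mkQ y) hy⟩

theorem map_mkQ_top (A : Submodule F L) : (⊤ : Submodule F L).map A.mkQ = ⊤ := by
  rw [Submodule.map_top, Submodule.range_mkQ]

theorem IsSubideal.map_mkQ {br : L →ₗ[F] L →ₗ[F] L} {A : Submodule F L} (hA : IsLeibIdeal br A)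
    {C : Submodule F L} (h : IsSubideal br C) : IsSubideal (quotBr br A hA) (C.map A.mkQ) := by
  obtain ⟨n, ch, h0, hn, hch⟩ := h
  exact ⟨n, fun i => (ch i).map A.mkQ, by simp only [h0], by simp only [hn, map_mkQ_top],
    fun i hi => (hch i hi).map_mkQ hA⟩

theorem IsSubideal.comap_mkQ {br : L →ₗ[F] L →ₗ[F] L} {A : Submodule F L} (hA : IsLeibIdeal br A)
    {D : Submodule F (L ⧸ A)} (h : IsSubideal (quotBr br A hA) D) :
    IsSubideal br (D.comap A.mkQ) := by
  obtain ⟨n, ch, h0, hn, hch⟩ := h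
  exact ⟨n, fun i => (ch i).comap A.mkQ, by simp only [h0], by simp only [hn, Submodule.comap_top],
    fun i hi => (hch i hi).comap_mkQ hA⟩

theorem leibCore_le (br : L →ₗ[F] L →ₗ[F] L) (B : Submodule F L) : leibCore br B ≤ B :=
  sSup_le fun _ h => h.2

theorem le_leibCore {br : L →ₗ[F] L →ₗ[F] L} {I B : Submodule F L} (hI : IsLeibIdeal br I)
    (hIB : I ≤ B) : I ≤ leibCore br B :=
  le_sSup ⟨hI, hIB⟩

theorem comap_map_mkQ_of_le {A B : Submodule F L} (hAB : A ≤ B) :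
    (B.map A.mkQ).comap A.mkQ = B := by
  rw [Submodule.comap_map_mkQ, sup_eq_right.mpr hAB]

theorem map_leibCore_le {br : L →ₗ[F] L →ₗ[F] L} {A : Submodule F L} (hA : IsLeibIdeal br A)
    (B : Submodule F L) :
    (leibCore br B).map A.mkQ ≤ leibCore (quotBr br A hA) (B.map A.mkQ) := by
  refine le_leibCore ?_ (Submodule.map_mono (leibCore_le br B))
  have h := IsIdealOf.map_mkQ hA (leibCore_isIdeal br B)
  rwa [map_mkQ_top] at h

theorem comap_leibCore_le {br : L →ₗ[F] L →ₗ[F] L} {A B : Submodule F L} (hA : IsLeibIdeal br A)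
    (hAB : A ≤ B) :
    (leibCore (quotBr br A hA) (B.map A.mkQ)).comap A.mkQ ≤ leibCore br B :=
  le_leibCore (IsIdealOf.comap_mkQ hA (leibCore_isIdeal _ _))
    ((Submodule.comap_mono (leibCore_le _ _)).trans (comap_map_mkQ_of_le hAB).le)

/-- for an ideal `A ⊆ B`, `B` is a weak c-ideal of `L` iff
`B/A` is a weak c-ideal of `L/A`. -/
theorem weakCIdeal_quotient_iff (br : L →ₗ[F] L →ₗ[F] L) (hbr : IsLeibnizBracket br)
    [FiniteDimensional F L] (A B : Submodule F L)
    (hA : IsLeibIdeal br A) (hAB : A ≤ B) (hB : IsSubalg br B) :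
    IsWeakCIdeal br B ↔ IsWeakCIdeal (quotBr br A hA) (B.map A.mkQ) := by
  constructor
  · rintro ⟨-, -, C, hC, hsup, hinf⟩
    refine ⟨?_, le_top, C.map A.mkQ, IsSubideal.map_mkQ hA hC, ?_, ?_⟩
    · rintro _ ⟨x, hx, rfl⟩ _ ⟨y, hy, rfl⟩
      exact ⟨br x y, hB x hx y hy, rfl⟩
    · rw [← Submodule.map_sup, hsup, map_mkQ_top]
    · rintro _ ⟨hb, c, hc, rfl⟩
      -- A representative `c ∈ C` of an element of `π(B)` already lies in `B`, as `A ≤ B`.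
      have hcB : c ∈ B := (comap_map_mkQ_of_le hAB).le hb
      exact map_leibCore_le hA B ⟨c, hinf ⟨hcB, hc⟩, rfl⟩
  · rintro ⟨-, -, D, hD, hsup, hinf⟩
    refine ⟨hB, le_top, D.comap A.mkQ, IsSubideal.comap_mkQ hA hD, ?_, ?_⟩
    · have hle : A ≤ B ⊔ D.comap A.mkQ := hAB.trans le_sup_left
      rw [← comap_map_mkQ_of_le hle, Submodule.map_sup,
        Submodule.map_comap_eq_of_surjective A.mkQ_surjective, hsup, Submodule.comap_top]
    · exact fun x hx => comap_leibCore_le hA hAB (hinf ⟨⟨x, hx.1, rfl⟩, hx.2⟩)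
end

section
/- Let L be a finite-dimensional Leibniz algebra over a field of characteristic zero and B an ideal of L. Then B is solvable if and only if every maximal subalgebra of L not containing B is a weak c-ideal of L. -/
/-!
Let `B` be solvable and `M` a maximal subalgebra not containing `B`. The terms of the derived
series of `B` are ideals of `L`. If `C` is the last one not contained in `M`, then `M + C = L`, and
`M ∩ C` is an ideal of `L` because `[C, C] ⊆ M`. So `C` witnesses that `M` is a weak c-ideal
(`isWeakCIdeal_of_isSolvableSub`).

Conversely, suppose `B` is not solvable and choose an ideal `A` maximal among those containing no
term of the derived series of `B`. Maximality forces `A` to contain the Leibniz kernel, and `L ⧸ A`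
to be a Lie algebra without nonzero abelian ideals. In characteristic zero Cartan's criterion makes
`L ⧸ A` semisimple, so its ideals are complemented (`exists_ideal_compl`); since any two nonzero
ideals of `L ⧸ A` meet in a term of the derived series of the image of `B`, the quotient is simple
(`exists_simple_quotient`). The only subideals of a simple algebra are zero and the algebra itself
(`IsSubideal.le_or_sup_eq_top`), so a maximal subalgebra `M ⊇ A` that is a weak c-ideal must equal
`A`. But any `x ∉ A` spans a proper subalgebra of `L ⧸ A`, hence lies in some such `M`, and `M` does
not contain `B`; this is a contradiction.
-/

open Submodule

variable {F : Type*} [Field F] {L : Type*} [AddCommGroup L] [Module F L]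

/-- In a right Leibniz algebra the bracket of an ideal with itself is again an ideal. -/
theorem IsLeibIdeal.brSpan_self {br : L →ₗ[F] L →ₗ[F] L} (hbr : IsLeibnizBracket br)
    {A : Submodule F L} (hA : IsLeibIdeal br A) : IsLeibIdeal br (brSpan br A A) := by
  refine ⟨le_top, fun x hx z _ => ?_⟩
  have hmem : ∀ a ∈ A, ∀ b ∈ A, br a b ∈ brSpan br A A := fun a ha b hb =>
    subset_span ⟨a, ha, b, hb, rfl⟩
  induction hx using span_induction with
  | mem x hx =>
    obtain ⟨a, ha, b, hb, rfl⟩ := hx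
    constructor
    · have h : br (br a b) z = br a (br b z) + br (br a z) b := by
        rw [hbr a b z]; abel
      rw [h]
      exact add_mem (hmem _ ha _ (hA.2 b hb z trivial).1) (hmem _ (hA.2 a ha z trivial).1 _ hb)
    · rw [hbr z a b]
      exact sub_mem (hmem _ (hA.2 a ha z trivial).2 _ hb) (hmem _ (hA.2 b hb z trivial).2 _ ha)
  | zero => simp
  | add u v _ _ hu hv =>
    exact ⟨by simpa using add_mem hu.1 hv.1, by simpa using add_mem hu.2 hv.2⟩
  | smul c u _ hu =>
    exact ⟨by simpa using smul_mem _ c hu.1, by simpa using smul_mem _ c hu.2⟩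

theorem brSpan_le {br : L →ₗ[F] L →ₗ[F] L} {A B C : Submodule F L} :
    brSpan br A B ≤ C ↔ ∀ x ∈ A, ∀ y ∈ B, br x y ∈ C := by
  refine span_le.trans ⟨fun h x hx y hy => h ⟨x, hx, y, hy, rfl⟩, ?_⟩
  rintro h _ ⟨x, hx, y, hy, rfl⟩
  exact h x hx y hy

theorem isLeibIdeal_derSeriesOf {br : L →ₗ[F] L →ₗ[F] L} (hbr : IsLeibnizBracket br)
    {B : Submodule F L} (hB : IsLeibIdeal br B) (k : ℕ) :
    IsLeibIdeal br (derSeriesOf br B k) := by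
  induction k with
  | zero => exact hB
  | succ k ih => exact ih.brSpan_self hbr

theorem derSeriesOf_le {br : L →ₗ[F] L →ₗ[F] L} (hbr : IsLeibnizBracket br)
    {B : Submodule F L} (hB : IsLeibIdeal br B) (k : ℕ) : derSeriesOf br B k ≤ B := by
  induction k with
  | zero => exact le_rfl
  | succ k ih =>
    exact (brSpan_le.2 fun x hx y _ =>
      ((isLeibIdeal_derSeriesOf hbr hB k).2 x hx y trivial).1).trans ih

theorem IsLeibIdeal.sup {br : L →ₗ[F] L →ₗ[F] L} {A B : Submodule F L}
    (hA : IsLeibIdeal br A) (hB : IsLeibIdeal br B) : IsLeibIdeal br (A ⊔ B) := by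
  rw [← sSup_pair]
  refine isLeibIdeal_sSup br _ ?_
  rintro _ (rfl | rfl) <;> assumption

theorem br_self_mem_leibnizKernel (br : L →ₗ[F] L →ₗ[F] L) (x : L) :
    br x x ∈ leibnizKernel br :=
  subset_span ⟨x, rfl⟩

theorem br_leibnizKernel_right {br : L →ₗ[F] L →ₗ[F] L} (hbr : IsLeibnizBracket br)
    (z : L) {x : L} (hx : x ∈ leibnizKernel br) : br z x = 0 := by
  induction hx using span_induction with
  | mem x hx =>
    obtain ⟨a, rfl⟩ := hx
    rw [hbr, sub_self]
  | zero => simp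
  | add u v _ _ hu hv => rw [map_add, hu, hv, add_zero]
  | smul c u _ hu => rw [map_smul, hu, smul_zero]

theorem isLeibIdeal_leibnizKernel {br : L →ₗ[F] L →ₗ[F] L} (hbr : IsLeibnizBracket br) :
    IsLeibIdeal br (leibnizKernel br) := by
  refine ⟨le_top, fun x hx z _ =>
    ⟨?_, by rw [br_leibnizKernel_right hbr z hx]; exact zero_mem _⟩⟩
  induction hx using span_induction with
  | mem x hx =>
    obtain ⟨a, rfl⟩ := hx
    -- `[[a,a],z]` is the polarisation of squares at `a` and `[a,z]`.
    have h : br (br a a) z =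
        br (a + br a z) (a + br a z) - br a a - br (br a z) (br a z) := by
      have h1 := hbr a a z
      simp only [map_add, LinearMap.add_apply]
      rw [h1]; abel
    rw [h]
    exact sub_mem (sub_mem (br_self_mem_leibnizKernel br _) (br_self_mem_leibnizKernel br _))
      (br_self_mem_leibnizKernel br _)
  | zero => simp
  | add u v _ _ hu hv => simpa using add_mem hu hv
  | smul c u _ hu => simpa using smul_mem _ c hu

/-- The quotient of a Leibniz algebra by an ideal containing all squares is a Lie ring. -/
abbrev quotLieRing (br : L →ₗ[F] L →ₗ[F] L) (hbr : IsLeibnizBracket br)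
    (A : Submodule F L) (hA : IsLeibIdeal br A) (hsq : ∀ x, br x x ∈ A) : LieRing (L ⧸ A) :=
  { (inferInstance : AddCommGroup (L ⧸ A)) with
    bracket := fun x y => quotBr br A hA x y
    add_lie := fun x y z => by simp
    lie_add := fun x y z => by simp
    lie_self := fun x => by
      obtain ⟨x, rfl⟩ := A.mkQ_surjective x
      exact (Submodule.Quotient.mk_eq_zero A).2 (hsq x)
    leibniz_lie := fun x y z => by
      obtain ⟨x, rfl⟩ := A.mkQ_surjective x
      obtain ⟨y, rfl⟩ := A.mkQ_surjective y
      obtain ⟨z, rfl⟩ := A.mkQ_surjective z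
      change A.mkQ (br x (br y z)) = A.mkQ (br (br x y) z) + A.mkQ (br y (br x z))
      rw [← map_add, ← sub_eq_zero, ← map_sub]
      refine (Submodule.Quotient.mk_eq_zero A).2 ?_
      -- Modulo the squares, `-[[x,z],y]` and `[y,[x,z]]` agree.
      have h : br x (br y z) - (br (br x y) z + br y (br x z)) =
          br y y + br (br x z) (br x z) - br (y + br x z) (y + br x z) := by
        rw [hbr x y z]
        simp only [map_add, LinearMap.add_apply]
        abel
      rw [h]
      exact sub_mem (add_mem (hsq _) (hsq _)) (hsq _) }

/-- Cartan's criterion, transported to Leibniz algebras: if `L ⧸ A` is a Lie algebra without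
nonzero abelian ideals, then the ideals of `L` are complemented modulo `A`. -/
theorem exists_ideal_compl [CharZero F] [FiniteDimensional F L]
    {br : L →ₗ[F] L →ₗ[F] L} (hbr : IsLeibnizBracket br)
    {A : Submodule F L} (hA : IsLeibIdeal br A) (hsq : ∀ x, br x x ∈ A)
    (hab : ∀ J, IsLeibIdeal br J → A ≤ J → (∀ x ∈ J, ∀ y ∈ J, br x y ∈ A) → J ≤ A)
    {J : Submodule F L} (hJ : IsLeibIdeal br J) :
    ∃ J', IsLeibIdeal br J' ∧ A ≤ J' ∧ J ⊓ J' ≤ A ∧ J ⊔ J' = ⊤ := by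
  let _ : LieRing (L ⧸ A) := quotLieRing br hbr A hA hsq
  let _ : LieAlgebra F (L ⧸ A) :=
    { (inferInstance : Module F (L ⧸ A)) with
      lie_smul := fun t x y => (quotBr br A hA x).map_smul t y }
  have hlie : ∀ x y : L, ⁅A.mkQ x, A.mkQ y⁆ = A.mkQ (br x y) := fun _ _ => rfl
  have hcomap : ∀ I : LieIdeal F (L ⧸ A), IsLeibIdeal br (I.toSubmodule.comap A.mkQ) := by
    intro I
    refine ⟨le_top, fun x hx y _ => ⟨?_, ?_⟩⟩
    · change A.mkQ (br x y) ∈ I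
      rw [← hlie]
      exact lie_mem_left F _ I _ _ hx
    · change A.mkQ (br y x) ∈ I
      rw [← hlie]
      exact lie_mem_right F _ I _ _ hx
  have hle : ∀ I : LieIdeal F (L ⧸ A), A ≤ I.toSubmodule.comap A.mkQ :=
    fun I => A.le_comap_mkQ _
  have : LieAlgebra.HasTrivialRadical F (L ⧸ A) := by
    rw [LieAlgebra.hasTrivialRadical_iff_no_abelian_ideals]
    intro I hI
    have h := hab _ (hcomap I) (hle I) fun x hx y hy => by
      have h0 : ⁅(⟨A.mkQ x, hx⟩ : I), (⟨A.mkQ y, hy⟩ : I)⁆ = 0 := hI.trivial _ _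
      have h1 : A.mkQ (br x y) = 0 := congrArg Subtype.val h0
      exact (Submodule.Quotient.mk_eq_zero A).1 h1
    rw [eq_bot_iff]
    intro x hx
    obtain ⟨x, rfl⟩ := A.mkQ_surjective x
    exact (Submodule.Quotient.mk_eq_zero A).2 (h hx)
  let I : LieIdeal F (L ⧸ A) :=
    { J.map A.mkQ with
      lie_mem := by
        rintro x _ ⟨m, hm, rfl⟩
        obtain ⟨x, rfl⟩ := A.mkQ_surjective x
        exact ⟨br x m, (hJ.2 m hm x trivial).2, rfl⟩ }
  obtain ⟨I', hI'⟩ := exists_isCompl I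
  have hJI : ∀ x ∈ J, A.mkQ x ∈ I := fun x hx => ⟨x, hx, rfl⟩
  refine ⟨_, hcomap I', hle I', ?_, ?_⟩
  · rintro x ⟨hx, hx'⟩
    have : A.mkQ x ∈ I ⊓ I' := ⟨hJI x hx, hx'⟩
    rw [hI'.inf_eq_bot] at this
    exact (Submodule.Quotient.mk_eq_zero A).1 this
  · rw [eq_top_iff]
    intro x _
    have hx : A.mkQ x ∈ I ⊔ I' := by rw [hI'.sup_eq_top]; trivial
    obtain ⟨_, ⟨u, hu, rfl⟩, v, hv, huv⟩ := (LieSubmodule.mem_sup _ _ _).1 hx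
    obtain ⟨v, rfl⟩ := A.mkQ_surjective v
    have h : x - u - v ∈ A := by
      refine (Submodule.Quotient.mk_eq_zero A).1 ?_
      change A.mkQ (x - u - v) = 0
      rw [map_sub, map_sub, ← huv]; abel
    have h' : x = u + (v + (x - u - v)) := by abel
    rw [h']
    exact add_mem (mem_sup_left hu) (mem_sup_right (add_mem hv (hle I' h)))

/-- A nonsolvable ideal survives in some simple quotient `L ⧸ A`: the ideal `A` is chosen maximal
subject to containing no term of the derived series of `B`. -/
theorem exists_simple_quotient [CharZero F] [FiniteDimensional F L]
    {br : L →ₗ[F] L →ₗ[F] L} (hbr : IsLeibnizBracket br)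
    {B : Submodule F L} (hB : IsLeibIdeal br B) (hns : ¬ IsSolvableSub br B) :
    ∃ A, IsLeibIdeal br A ∧ (∀ x, br x x ∈ A) ∧ (∀ k, ¬ derSeriesOf br B k ≤ A) ∧
      ∀ J, IsLeibIdeal br J → A ≤ J → J = A ∨ J = ⊤ := by
  obtain ⟨A, ⟨hA, hAk⟩, hmax⟩ := set_has_maximal_iff_noetherian.2
    (inferInstance : IsNoetherian F L)
    {A : Submodule F L | IsLeibIdeal br A ∧ ∀ k, ¬ derSeriesOf br B k ≤ A}
    ⟨⊥, ⟨le_top, fun x hx y _ => by simp [(mem_bot F).1 hx]⟩,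
      fun k hk => hns ⟨k, le_bot_iff.1 hk⟩⟩
  have hstep : ∀ J, IsLeibIdeal br J → A ≤ J → ¬ J ≤ A → ∃ k, derSeriesOf br B k ≤ J := by
    intro J hJ hAJ hJA
    by_contra! h
    exact hmax J ⟨hJ, h⟩ (lt_of_le_not_ge hAJ hJA)
  have hab : ∀ J, IsLeibIdeal br J → A ≤ J → (∀ x ∈ J, ∀ y ∈ J, br x y ∈ A) → J ≤ A := by
    intro J hJ hAJ hJJ
    by_contra hJA
    obtain ⟨k, hk⟩ := hstep J hJ hAJ hJA
    exact hAk (k + 1) (brSpan_le.2 fun x hx y hy => hJJ x (hk hx) y (hk hy))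
  have hsq : ∀ x, br x x ∈ A := by
    refine fun x => hab (A ⊔ leibnizKernel br) (hA.sup (isLeibIdeal_leibnizKernel hbr))
      le_sup_left ?_ (mem_sup_right (br_self_mem_leibnizKernel br x))
    intro u _ v hv
    obtain ⟨a, ha, i, hi, rfl⟩ := mem_sup.1 hv
    rw [map_add, br_leibnizKernel_right hbr u hi, add_zero]
    exact (hA.2 a ha u trivial).2
  refine ⟨A, hA, hsq, hAk, fun J hJ hAJ => ?_⟩
  obtain ⟨J', hJ', hAJ', hinf, hsup⟩ := exists_ideal_compl hbr hA hsq hab hJ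
  by_cases h : J ≤ A
  · exact Or.inl (le_antisymm h hAJ)
  by_cases h' : J' ≤ A
  · exact Or.inr (by rw [← hsup, sup_eq_left.2 (h'.trans hAJ)])
  -- Two ideals strictly above `A` both contain a late term of the derived series of `B`.
  obtain ⟨k, hk⟩ := hstep J hJ hAJ h
  obtain ⟨k', hk'⟩ := hstep J' hJ' hAJ' h'
  have hanti : Antitone (derSeriesOf br B) := antitone_nat_of_succ_le fun n =>
    brSpan_le.2 fun x hx y _ => ((isLeibIdeal_derSeriesOf hbr hB n).2 x hx y trivial).1
  exact absurd ((le_inf ((hanti (le_max_left k k')).trans hk)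
    ((hanti (le_max_right k k')).trans hk')).trans hinf) (hAk _)

/-- A subideal of `L` either lies in `A` or supplements it, when `L ⧸ A` is simple. -/
theorem IsSubideal.le_or_sup_eq_top {br : L →ₗ[F] L →ₗ[F] L} {A C : Submodule F L}
    (hA : IsLeibIdeal br A) (hsimple : ∀ J, IsLeibIdeal br J → A ≤ J → J = A ∨ J = ⊤)
    (hC : IsSubideal br C) : C ≤ A ∨ A ⊔ C = ⊤ := by
  obtain ⟨n, ch, rfl, hn, hch⟩ := hC
  have key : ∀ i ≤ n, ch i ≤ A ∨ A ⊔ ch i = ⊤ := by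
    intro i hi
    induction hi using Nat.decreasingInduction with
    | self => right; rw [hn, sup_top_eq]
    | @of_succ i hi ih =>
      have hid := hch i hi
      rcases ih with ih | ih
      · exact Or.inl (hid.1.trans ih)
      -- `A ⊔ ch i` is an ideal of `A ⊔ ch (i + 1) = L`.
      have hsup : IsLeibIdeal br (A ⊔ ch i) := by
        refine ⟨le_top, fun x hx y hy => ?_⟩
        rw [← ih] at hy
        obtain ⟨a, ha, c, hc, rfl⟩ := mem_sup.1 hx
        obtain ⟨a', ha', d, hd, rfl⟩ := mem_sup.1 hy
        have e1 : br (a + c) (a' + d) = (br a (a' + d) + br c a') + br c d := by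
          simp only [map_add, LinearMap.add_apply]; abel
        have e2 : br (a' + d) (a + c) = (br (a' + d) a + br a' c) + br d c := by
          simp only [map_add, LinearMap.add_apply]; abel
        rw [e1, e2]
        exact ⟨add_mem (mem_sup_left (add_mem (hA.2 a ha _ trivial).1 (hA.2 a' ha' c trivial).2))
            (mem_sup_right (hid.2 c hc d hd).1),
          add_mem (mem_sup_left (add_mem (hA.2 a ha _ trivial).2 (hA.2 a' ha' c trivial).1))
            (mem_sup_right (hid.2 c hc d hd).2)⟩
      rcases hsimple _ hsup le_sup_left with h | h
      · exact Or.inl (h ▸ le_sup_right)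
      · exact Or.inr h
  exact key 0 (Nat.zero_le n)

/-- If `B` is solvable, the last term of its derived series not contained in `M` is a supplement
whose intersection with `M` is an ideal. -/
theorem isWeakCIdeal_of_isSolvableSub {br : L →ₗ[F] L →ₗ[F] L} (hbr : IsLeibnizBracket br)
    {B M : Submodule F L} (hB : IsLeibIdeal br B) (hsol : IsSolvableSub br B)
    (hM : IsMaximalSubalg br M) (hBM : ¬ B ≤ M) : IsWeakCIdeal br M := by
  obtain ⟨n, hn⟩ := hsol
  obtain ⟨k, hk, hk'⟩ : ∃ k, ¬ derSeriesOf br B k ≤ M ∧ derSeriesOf br B (k + 1) ≤ M := by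
    by_contra! h
    exact Nat.rec (motive := fun n => ¬ derSeriesOf br B n ≤ M) hBM (fun k hk => h k hk) n
      (hn ▸ bot_le)
  set C := derSeriesOf br B k
  have hC : IsLeibIdeal br C := isLeibIdeal_derSeriesOf hbr hB k
  have hCC : ∀ x ∈ C, ∀ y ∈ C, br x y ∈ M := brSpan_le.1 hk'
  have hsub : IsSubalg br (M ⊔ C) := by
    intro x hx y hy
    obtain ⟨m, hm, c, hc, rfl⟩ := mem_sup.1 hx
    obtain ⟨m', hm', c', hc', rfl⟩ := mem_sup.1 hy
    have e : br (m + c) (m' + c') = br m m' + (br m c' + br c (m' + c')) := by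
      simp only [map_add, LinearMap.add_apply]; abel
    rw [e]
    exact add_mem (mem_sup_left (hM.1 m hm m' hm'))
      (mem_sup_right (add_mem (hC.2 c' hc' m trivial).2 (hC.2 c hc _ trivial).1))
  have hsup : M ⊔ C = ⊤ := (hM.2.2 _ hsub le_sup_left le_top).resolve_left
    fun h => hk (h ▸ le_sup_right)
  refine ⟨hM.1, le_top, C, ⟨1, fun i => if i = 0 then C else ⊤, by simp, by simp, ?_⟩, hsup, ?_⟩
  · intro i hi
    obtain rfl : i = 0 := by omega
    simpa [IsLeibIdeal] using hC
  · refine le_sSup ⟨⟨le_top, fun x hx y _ => ?_⟩, inf_le_left⟩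
    have hy : y ∈ M ⊔ C := hsup ▸ mem_top
    obtain ⟨m, hm, c, hc, rfl⟩ := mem_sup.1 hy
    have h := hC.2 x hx.2 (m + c) trivial
    refine ⟨⟨?_, h.1⟩, ⟨?_, h.2⟩⟩
    · rw [map_add]
      exact add_mem (hM.1 x hx.1 m hm) (hCC x hx.2 c hc)
    · rw [map_add, LinearMap.add_apply]
      exact add_mem (hM.1 m hm x hx.1) (hCC c hc x hx.2)

theorem exists_isMaximalSubalg_ge [FiniteDimensional F L] (br : L →ₗ[F] L →ₗ[F] L)
    {H : Submodule F L} (hH : IsSubalg br H) (hne : H ≠ ⊤) :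
    ∃ M, IsMaximalSubalg br M ∧ H ≤ M := by
  obtain ⟨M, ⟨hM, hHM, hMt⟩, hmax⟩ := set_has_maximal_iff_noetherian.2
    (inferInstance : IsNoetherian F L)
    {M : Submodule F L | IsSubalg br M ∧ H ≤ M ∧ M ≠ ⊤} ⟨H, hH, le_rfl, hne⟩
  refine ⟨M, ⟨hM, lt_top_iff_ne_top.2 hMt, fun K hK hMK _ => ?_⟩, hHM⟩
  by_contra! h
  exact hmax K ⟨hK, hHM.trans hMK, h.2⟩ (lt_of_le_of_ne hMK h.1.symm)

/-- over a field of characteristic zero, an ideal `B` of `L` is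
solvable iff every maximal subalgebra of `L` not containing `B` is a weak
c-ideal of `L`. -/
theorem ideal_solvable_iff_maximal_weakCIdeal [CharZero F]
    (br : L →ₗ[F] L →ₗ[F] L) (hbr : IsLeibnizBracket br)
    [FiniteDimensional F L] (B : Submodule F L) (hB : IsLeibIdeal br B) :
    IsSolvableSub br B ↔
      ∀ M : Submodule F L, IsMaximalSubalg br M → ¬ B ≤ M → IsWeakCIdeal br M := by
  refine ⟨fun hsol M hM hBM => isWeakCIdeal_of_isSolvableSub hbr hB hsol hM hBM, fun hall => ?_⟩
  by_contra hns
  obtain ⟨A, hA, hsq, hAk, hsimple⟩ := exists_simple_quotient hbr hB hns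
  obtain ⟨x, -, hxA⟩ := SetLike.not_le_iff_exists.1 (hAk 0)
  -- A line in the simple quotient, pulled back to `L`, is a subalgebra with brackets in `A`.
  have hline : ∀ u ∈ A ⊔ span F {x}, ∀ v ∈ A ⊔ span F {x}, br u v ∈ A := by
    intro u hu v hv
    obtain ⟨a, ha, c, hc, rfl⟩ := mem_sup.1 hu
    obtain ⟨a', ha', d, hd, rfl⟩ := mem_sup.1 hv
    obtain ⟨s, rfl⟩ := mem_span_singleton.1 hc
    obtain ⟨t, rfl⟩ := mem_span_singleton.1 hd
    have e : br (a + s • x) (a' + t • x) =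
        br a (a' + t • x) + br (s • x) a' + t • s • br x x := by
      simp only [map_add, map_smul, LinearMap.add_apply, LinearMap.smul_apply, smul_add]
      abel
    rw [e]
    exact add_mem (add_mem (hA.2 a ha _ trivial).1 (hA.2 a' ha' _ trivial).2)
      (smul_mem _ _ (smul_mem _ _ (hsq x)))
  have hne : A ⊔ span F {x} ≠ ⊤ := by
    intro h
    rw [h] at hline
    exact hAk 1 (brSpan_le.2 fun u _ v _ => hline u trivial v trivial)
  obtain ⟨M, hM, hxM⟩ := exists_isMaximalSubalg_ge br
    (fun u hu v hv => mem_sup_left (hline u hu v hv)) hne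
  have hAM : A ≤ M := le_sup_left.trans hxM
  have hxM : x ∈ M := hxM (mem_sup_right (mem_span_singleton_self x))
  have hMt : M ≠ ⊤ := hM.2.1.ne
  -- An ideal inside `M` is zero modulo `A`, while `B` is everything modulo `A`.
  have hideal : ∀ J, IsLeibIdeal br J → J ≤ M → J ≤ A := by
    intro J hJ hJM
    rcases hsimple _ (hA.sup hJ) le_sup_left with h | h
    · exact h ▸ le_sup_right
    · exact absurd (top_le_iff.1 (h ▸ sup_le hAM hJM)) hMt
  obtain ⟨-, -, C, hC, hMC, hcore⟩ := hall M hM fun h => hAk 0 (hideal B hB h)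
  have hcoreA : M ⊓ C ≤ A :=
    hcore.trans (hideal _ (leibCore_isIdeal br M) (sSup_le fun _ hJ => hJ.2))
  rcases IsSubideal.le_or_sup_eq_top hA hsimple hC with h | h
  · exact hMt (by rw [← hMC, sup_eq_left.2 (h.trans hAM)])
  · -- `x ∈ M = M ⊓ (A ⊔ C)`, so `x` lies in `A ⊔ (M ⊓ C) = A`.
    have hx : x ∈ A ⊔ C := h ▸ mem_top
    obtain ⟨a, ha, c, hc, rfl⟩ := mem_sup.1 hx
    have hcM : c ∈ M := by simpa using sub_mem hxM (hAM ha)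
    exact hxA (add_mem ha (hcoreA ⟨hcM, hc⟩))
end

section
/- Let L be a finite-dimensional Leibniz algebra with L = U + C, where U is a solvable subalgebra of L and C is a subideal of L. Then there exists n₀ ∈ ℕ such that L^(n₀) ⊆ C, where L^(n₀) denotes the n₀-th term of the derived series. -/
/-!
Write `L^(k)` and `U^(k)` for the derived series of `L` and `U`, and let
`C = C_0 ⊆ ... ⊆ C_n = L` be the chain witnessing that `C` is a subideal. Every `C_i` contains
`C`, so `L = U + C_i`. Suppose `L^(m) ⊆ C_{i+1}`. Since `C_i` is an ideal of `C_{i+1}`, elements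
of `L^(m)` may be bracketed modulo `C_i`, where they are represented by elements of `U`; hence
`L^(m+k) ⊆ U^(k) + C_i` for all `k` (`derSeriesOf_top_add_le`). Solvability of `U` gives
`L^(m+N) ⊆ C_i` for `N` with `U^(N) = 0`, and descending the chain reaches `C_0 = C`.
-/

open Submodule

variable {F : Type*} [Field F] {L : Type*} [AddCommGroup L] [Module F L]

theorem brSpan_mono (br : L →ₗ[F] L →ₗ[F] L) {A A' B B' : Submodule F L}
    (hA : A ≤ A') (hB : B ≤ B') : brSpan br A B ≤ brSpan br A' B' :=
  Submodule.span_mono fun _ ⟨x, hx, y, hy, h⟩ => ⟨x, hA hx, y, hB hy, h⟩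

theorem derSeriesOf_top_antitone (br : L →ₗ[F] L →ₗ[F] L) :
    Antitone (derSeriesOf br (⊤ : Submodule F L)) := by
  refine antitone_nat_of_succ_le fun n => ?_
  induction n with
  | zero => exact le_top
  | succ n ih => exact brSpan_mono br ih ih

/-- One step of the descent along the chain: if `A` is an ideal of `B`, `L = U + A`
and `L^(m) ⊆ B`, the derived series of `L` follows that of `U` modulo `A`. -/
theorem derSeriesOf_top_add_le (br : L →ₗ[F] L →ₗ[F] L) {U A B : Submodule F L}
    (hAB : IsIdealOf br A B) (hUA : U ⊔ A = ⊤) {m : ℕ} (hm : derSeriesOf br ⊤ m ≤ B) (k : ℕ) :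
    derSeriesOf br ⊤ (m + k) ≤ derSeriesOf br U k ⊔ A := by
  induction k with
  | zero => exact le_top.trans hUA.ge
  | succ k ih =>
    refine Submodule.span_le.2 ?_
    rintro _ ⟨x, hx, y, hy, rfl⟩
    have hB : derSeriesOf br ⊤ (m + k) ≤ B :=
      (derSeriesOf_top_antitone br (Nat.le_add_right m k)).trans hm
    obtain ⟨u, hu, a, ha, rfl⟩ := Submodule.mem_sup.1 (ih hx)
    obtain ⟨v, hv, b, hb, rfl⟩ := Submodule.mem_sup.1 (ih hy)
    -- `u` lies in `B` because `u + a` and `a` do, so `[u, b]` lies in the ideal `A` of `B`.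
    have huB : u ∈ B := (B.add_mem_iff_left (hAB.1 ha)).1 (hB hx)
    refine Submodule.mem_sup.2 ⟨br u v, Submodule.subset_span ⟨u, hu, v, hv, rfl⟩,
      br u b + br a (v + b), A.add_mem (hAB.2 b hb u huB).2 (hAB.2 a ha _ (hB hy)).1, ?_⟩
    simp only [map_add, LinearMap.add_apply]
    abel

/-- if `L = U + C` with `U` a solvable subalgebra and `C` a
subideal, then some term of the derived series of `L` lies in `C`. -/
theorem derSeries_le_subideal (br : L →ₗ[F] L →ₗ[F] L) (hbr : IsLeibnizBracket br)
    [FiniteDimensional F L] (U C : Submodule F L)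
    (hU : IsSubalg br U) (hUsolv : IsSolvableSub br U)
    (hC : IsSubideal br C) (hsum : U ⊔ C = ⊤) :
    ∃ n₀ : ℕ, derSeriesOf br ⊤ n₀ ≤ C := by
  obtain ⟨N, hN⟩ := hUsolv
  obtain ⟨n, ch, h0, hn, hch⟩ := hC
  have hCle : ∀ i ≤ n, C ≤ ch i := by
    intro i
    induction i with
    | zero => exact fun _ => h0.ge
    | succ i ih => exact fun hi => (ih (by omega)).trans (hch i (by omega)).1
  -- Descend the chain from `ch n = ⊤` to `ch 0 = C`.
  have key : ∀ j ≤ n, ∃ m, derSeriesOf br ⊤ m ≤ ch (n - j) := by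
    intro j
    induction j with
    | zero => exact fun _ => ⟨0, by simp [hn]⟩
    | succ j ih =>
      intro hj
      obtain ⟨m, hm⟩ := ih (by omega)
      have hideal := hch (n - (j + 1)) (by omega)
      rw [show n - (j + 1) + 1 = n - j by omega] at hideal
      have hUA : U ⊔ ch (n - (j + 1)) = ⊤ :=
        top_unique (hsum ▸ sup_le_sup_left (hCle _ (by omega)) U)
      exact ⟨m + N, by
        simpa [hN] using derSeriesOf_top_add_le br hideal hUA hm N⟩
  obtain ⟨m, hm⟩ := key n le_rfl
  exact ⟨m, by simpa [h0] using hm⟩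
end
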